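/- Let f : [0,1]^2 → ℝ be continuous and monotone (i.e. every level set f⁻¹(t) is connected). Then the set S \ E^* has two-dimensional Lebesgue measure zero, where S is the critical set of f and E^* is the union over all t ∈ ℝ of the connected components of positive length of the level sets f⁻¹(t). -/

import Mathlib

open MeasureTheory Set

noncomputable section

/-- The unit square `[0,1]²` in the Euclidean plane. -/
def unitSquare : Set (EuclideanSpace ℝ (Fin 2)) := {x | ∀ i, x i ∈ Set.Icc (0:ℝ) 1}

/-- The critical set of `f : [0,1]² → ℝ`: points of the square where `f` is either not
differentiable or has vanishing gradient. -/
def critSet (f : EuclideanSpace ℝ (Fin 2) → ℝ) : Set (EuclideanSpace ℝ (Fin 2)) :=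
  {x | x ∈ unitSquare ∧
    (¬ DifferentiableWithinAt ℝ f unitSquare x ∨ fderivWithin ℝ f unitSquare x = 0)}

/-- The set `E* = ⋃ₜ Eₜ*`: the union over `t` of all connected components of the level set
`Eₜ = {f = t}` having strictly positive one-dimensional Hausdorff measure. -/
def Estar (f : EuclideanSpace ℝ (Fin 2) → ℝ) : Set (EuclideanSpace ℝ (Fin 2)) :=
  {x | 0 < μH[1] (connectedComponentIn (unitSquare ∩ f ⁻¹' {f x}) x)}

lemma eq_singleton_of_hausdorff_zero {L : Set (EuclideanSpace ℝ (Fin 2))} (hL : IsPreconnected L)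
    (h0 : μH[1] L = 0) {x y : EuclideanSpace ℝ (Fin 2)} (hx : x ∈ L) (hy : y ∈ L) : y = x := by
  by_contra hne
  have hd : 0 < dist y x := dist_pos.2 hne
  have hlip : LipschitzWith 1 (fun p : EuclideanSpace ℝ (Fin 2) => dist p x) :=
    LipschitzWith.dist_left x
  have himg : IsPreconnected ((fun p => dist p x) '' L) :=
    hL.image _ hlip.continuous.continuousOn
  have hsub : Icc 0 (dist y x) ⊆ (fun p => dist p x) '' L :=
    himg.Icc_subset ⟨x, hx, dist_self x⟩ ⟨y, hy, rfl⟩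
  have hle := (hlip.lipschitzOnWith (s := L)).hausdorffMeasure_image_le (d := 1) zero_le_one
  rw [h0, mul_zero] at hle
  have h2 : μH[1] (Icc 0 (dist y x)) ≤ 0 := (measure_mono hsub).trans hle
  rw [MeasureTheory.hausdorffMeasure_real, Real.volume_Icc] at h2
  simp at h2
  exact hne h2

lemma unitSquare_convex : Convex ℝ unitSquare := by
  intro x hx y hy a b ha hb hab i
  have := convex_Icc (0:ℝ) 1 (hx i) (hy i) ha hb hab
  simpa using this

lemma crossing (f : EuclideanSpace ℝ (Fin 2) → ℝ)
    (hf : ContinuousOn f unitSquare) {x y z : EuclideanSpace ℝ (Fin 2)}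
    (hx : x ∈ unitSquare) (hz : z ∈ unitSquare)
    (hy : ∀ p ∈ unitSquare, f p = f y → p = y)
    (h1 : f x < f y) (h2 : f y < f z) : y ∈ segment ℝ x z := by
  have hseg : segment ℝ x z ⊆ unitSquare := unitSquare_convex.segment_subset hx hz
  have hpre : IsPreconnected (f '' segment ℝ x z) :=
    (convex_segment x z).isPreconnected.image _ (hf.mono hseg)
  obtain ⟨p, hp, hpy⟩ := hpre.Icc_subset ⟨x, left_mem_segment ℝ x z, rfl⟩
    ⟨z, right_mem_segment ℝ x z, rfl⟩ ⟨h1.le, h2.le⟩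
  rw [← hy p (hseg hp) hpy]
  exact hp

lemma extremal (f : EuclideanSpace ℝ (Fin 2) → ℝ)
    (hf : ContinuousOn f unitSquare) {x y z : EuclideanSpace ℝ (Fin 2)}
    (hx : x ∈ unitSquare) (hz : z ∈ unitSquare)
    (hy : ∀ p ∈ unitSquare, f p = f y → p = y)
    (h1 : f x < f y) (h2 : f y < f z) : False := by
  have hyx : y ≠ x := by rintro rfl; exact lt_irrefl _ h1
  have hyz : y ≠ z := by rintro rfl; exact lt_irrefl _ h2
  obtain ⟨a, b, ha, hb, hab, hy0⟩ := crossing f hf hx hz hy h1 h2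
  have e0 : a * x 0 + b * z 0 = y 0 := by rw [← hy0]; simp
  have e1 : a * x 1 + b * z 1 = y 1 := by rw [← hy0]; simp
  have key : ∀ w ∈ unitSquare,
      (x 0 - z 0) * (w 1 - y 1) - (x 1 - z 1) * (w 0 - y 0) = 0 := by
    intro w hw
    obtain rfl : a = 1 - b := by linarith
    rcases lt_trichotomy (f w) (f y) with h | h | h
    · obtain ⟨c, d, hc, hd, hcd, hwy⟩ := crossing f hf hw hz hy h h2
      have g0 : c * w 0 + d * z 0 = y 0 := by rw [← hwy]; simp
      have g1 : c * w 1 + d * z 1 = y 1 := by rw [← hwy]; simp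
      have hc0 : c ≠ 0 := by
        rintro rfl
        obtain rfl : d = 1 := by linarith
        apply hyz; rw [← hwy]; simp
      obtain rfl : d = 1 - c := by linarith
      apply mul_left_cancel₀ hc0
      rw [← e0, ← e1] at *
      linear_combination (x 0 - z 0) * g1 - (x 1 - z 1) * g0
    · rw [hy w hw h]; ring
    · obtain ⟨c, d, hc, hd, hcd, hwy⟩ := crossing f hf hx hw hy h1 h
      have g0 : c * x 0 + d * w 0 = y 0 := by rw [← hwy]; simp
      have g1 : c * x 1 + d * w 1 = y 1 := by rw [← hwy]; simp
      have hd0 : d ≠ 0 := by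
        rintro rfl
        obtain rfl : c = 1 := by linarith
        apply hyx; rw [← hwy]; simp
      obtain rfl : c = 1 - d := by linarith
      apply mul_left_cancel₀ hd0
      rw [← e0, ← e1] at *
      linear_combination (x 0 - z 0) * g1 - (x 1 - z 1) * g0
  have k0 := key (!₂[0, 0]) (by intro i; fin_cases i <;> simp)
  have k1 := key (!₂[1, 0]) (by intro i; fin_cases i <;> simp)
  have k2 := key (!₂[0, 1]) (by intro i; fin_cases i <;> simp)
  simp at k0 k1 k2
  have hxz : x = z := by
    ext i
    fin_cases i
    · show x 0 = z 0
      linarith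
    · show x 1 = z 1
      linarith
  rw [hxz] at h1
  exact lt_asymm h1 h2

/-- If `f : [0,1]² → ℝ` is continuous and monotone (every level set is connected), then
`S \ E*` has two-dimensional Lebesgue measure zero. -/
theorem critSet_diff_Estar_null_of_monotone (f : EuclideanSpace ℝ (Fin 2) → ℝ)
    (hf : ContinuousOn f unitSquare)
    (hmono : ∀ t : ℝ, IsPreconnected (unitSquare ∩ f ⁻¹' {t})) :
    volume (critSet f \ Estar f) = 0 := by
  have hA : ∀ y ∈ critSet f \ Estar f, y ∈ unitSquare ∧
      ∀ p ∈ unitSquare, f p = f y → p = y := by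
    rintro y ⟨⟨hy, -⟩, hE⟩
    refine ⟨hy, fun p hp hpy => ?_⟩
    have hyL : y ∈ unitSquare ∩ f ⁻¹' {f y} := ⟨hy, rfl⟩
    have h0 : μH[1] (connectedComponentIn (unitSquare ∩ f ⁻¹' {f y}) y) = 0 := by
      by_contra h
      exact hE (pos_iff_ne_zero.2 h)
    rw [(hmono (f y)).connectedComponentIn hyL] at h0
    exact eq_singleton_of_hausdorff_zero (hmono (f y)) h0 hyL ⟨hp, hpy⟩
  have hsub : critSet f \ Estar f ⊆
      {y | y ∈ critSet f \ Estar f ∧ ∀ p ∈ unitSquare, f y ≤ f p} ∪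
      {y | y ∈ critSet f \ Estar f ∧ ∀ p ∈ unitSquare, f p ≤ f y} := by
    intro y hy
    by_contra hcon
    simp only [mem_union, mem_setOf_eq, not_or, not_and] at hcon
    have c1 := hcon.1 hy
    have c2 := hcon.2 hy
    push Not at c1 c2
    obtain ⟨x, hx, hxy⟩ := c1
    obtain ⟨z, hz, hzy⟩ := c2
    exact extremal f hf hx hz (hA y hy).2 hxy hzy
  refine measure_mono_null hsub (measure_union_null ?_ ?_)
  · refine Set.Subsingleton.measure_zero ?_ _
    rintro y ⟨hy, hy'⟩ z ⟨hz, hz'⟩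
    exact (hA z hz).2 y (hA y hy).1 (le_antisymm (hy' z (hA z hz).1) (hz' y (hA y hy).1))
  · refine Set.Subsingleton.measure_zero ?_ _
    rintro y ⟨hy, hy'⟩ z ⟨hz, hz'⟩
    exact (hA z hz).2 y (hA y hy).1 (le_antisymm (hz' y (hA y hy).1) (hy' z (hA z hz).1))
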